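/- The subgroup Aut⁰G of conjugating automorphisms of G=W(Γ,o) (automorphisms θ such that θ(x) is a conjugate of x for every vertex x∈V) is generated by the partial conjugations σ_{K,v}. -/

import Mathlib

/-!
Every conjugate `x v x⁻¹` of a generator is treated as a rotation of `W(Γ,o)` about a wall, the coset
`x⟨v★⟩`. A cocycle `cc` with values in `ℤ/o(v)`, obtained directly from the presentation, labels the
sectors into which the wall cuts the group; multiplying `g` on the right by a generator `u` changes
only the label at the wall `g⟨u★⟩`. No normal form theorem is used: deleting from a word the
syllables that cross a given wall multiplies it by a power of the rotation, and folds its sector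
onto that of `1` (`fold_word`).

A conjugating automorphism `θ` moves each wall `⟨v★⟩` to `w v⟨v★⟩`, where `θ v = w v · v · (w v)⁻¹`.
Adjacent vertices have intersecting walls, since their rotations commute (`exists_common`).
* If the wall of some `v` separates `1` from the wall of some `u ∉ v★`, it separates `1` in the same
  way from the walls of the whole component `K` of `u` in `Γ ∖ v★`, since these walls are linked by
  intersections and none crosses the wall of `v` (`cc_component`). Composing `θ` with a power of the
  partial conjugation `σ_{K,v}` then folds them all towards `1`, and the total length of words for
  the conjugators `w v` drops (`mem_closure_of_conj`).
* If there is no such pair, a ping-pong argument shows that `θ g` has the same sector labels at the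
  walls of `θ` as `g` has at the walls `⟨v★⟩` (`ping_pong`). Surjectivity of `θ` then forces
  `w v ∈ ⟨v★⟩` for all `v`, that is `θ = 1` (`eq_one_of_no_sep`).
-/

/- Graph products of cyclic groups W(Γ,o), following Corredor–Gutierrez.
   A label `o v = 0` means the vertex group is infinite cyclic; otherwise
   `o v` is a prime power > 1 and the vertex group is cyclic of order `o v`. -/

namespace GP

variable {V : Type}

/-- Relations of the graph product of cyclic groups determined by `(Γ, o)`. -/
def rels (Γ : SimpleGraph V) (o : V → ℕ) : Set (FreeGroup V) :=
  {r | (∃ v : V, o v ≠ 0 ∧ r = FreeGroup.of v ^ (o v)) ∨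
    (∃ x y : V, Γ.Adj x y ∧
      r = FreeGroup.of x * FreeGroup.of y * (FreeGroup.of x)⁻¹ * (FreeGroup.of y)⁻¹)}

/-- The graph product `W(Γ,o)`. -/
abbrev W (Γ : SimpleGraph V) (o : V → ℕ) : Type := PresentedGroup (rels Γ o)

/-- `o` labels each vertex with a prime power `> 1` or `0` (standing for `∞`). -/
def IsLabeling (o : V → ℕ) : Prop := ∀ v, o v = 0 ∨ IsPrimePow (o v)

variable (Γ : SimpleGraph V) (o : V → ℕ)

/-- The generator of `W(Γ,o)` corresponding to a vertex. -/
def gen (v : V) : W Γ o := PresentedGroup.of v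

/-- Evaluation of a word `v₁^{n₁} ⋯ v_p^{n_p}` in the group. -/
def evalWord (l : List (V × ℤ)) : W Γ o := (l.map fun p => gen Γ o p.1 ^ p.2).prod

/-- The length `Σ |n_i|` of a word. -/
def wordLen (l : List (V × ℤ)) : ℕ := (l.map fun p => p.2.natAbs).sum

/-- The length of a group element: the minimal length of a word representing it. -/
noncomputable def len (g : W Γ o) : ℕ := sInf (wordLen '' {l | evalWord Γ o l = g})

/-- `l` is a reduced word for `g`: it represents `g` and has minimal length. -/
def IsReducedWord (l : List (V × ℤ)) (g : W Γ o) : Prop :=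
  evalWord Γ o l = g ∧ ∀ l' : List (V × ℤ), evalWord Γ o l' = g → wordLen l ≤ wordLen l'

/-- The support of `g`: the vertices occurring in a reduced word for `g`. -/
def supp (g : W Γ o) : Set V :=
  {v | ∃ l, IsReducedWord Γ o l g ∧ v ∈ l.map Prod.fst}

/-- `g` is cyclically reduced. -/
def IsCR (g : W Γ o) : Prop :=
  ∀ v : V, supp Γ o g ⊆ supp Γ o (gen Γ o v * g * (gen Γ o v)⁻¹) ∧
    supp Γ o g ⊆ supp Γ o ((gen Γ o v)⁻¹ * g * gen Γ o v)

/-- The cyclic support of `g`: the support of the cyclically reduced part of `g`. -/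
def csupp (g : W Γ o) : Set V :=
  {x | ∃ w u : W Γ o, g = w * u * w⁻¹ ∧ IsCR Γ o u ∧ x ∈ supp Γ o u}

/-- The star `v★ = {v} ∪ lk v` of a vertex. -/
def vstar (v : V) : Set V := insert v (Γ.neighborSet v)

/-- The domination order: `x ≤ y` iff `lk x ⊆ y★`. -/
def vle (x y : V) : Prop := Γ.neighborSet x ⊆ vstar Γ y

/-- Strong domination: `x ≤ₛ y` iff `x★ ⊆ y★`. -/
def vles (x y : V) : Prop := vstar Γ x ⊆ vstar Γ y

/-- The `∼`-class `[v]` of a vertex. -/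
def simClass (v : V) : Set V := {x | vle Γ v x ∧ vle Γ x v}

/-- The `∼ₛ`-class `[v]ₛ` of a vertex. -/
def sClass (v : V) : Set V := {x | vles Γ v x ∧ vles Γ x v}

/-- The vertex set of `Γ_v`, the full subgraph on the vertices dominating `v`. -/
def GammaSet (v : V) : Set V := {x | vle Γ v x}

/-- The link of a set of vertices: `⋂_{s ∈ S} lk s`. -/
def lkSet (S : Set V) : Set V := {x | ∀ s ∈ S, Γ.Adj s x}

/-- `K` is (the vertex set of) a connected component of the full subgraph of `Λ` on `s`. -/
def IsCompOf (Λ : SimpleGraph V) (s K : Set V) : Prop :=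
  ∃ c : (SimpleGraph.induce s Λ).ConnectedComponent, K = Subtype.val '' c.supp

/-- The subgroup `⟨S⟩` generated by a set of vertices. -/
def genSubgroup (S : Set V) : Subgroup (W Γ o) := Subgroup.closure (gen Γ o '' S)

/-- `r` is a root of `g`: `g = r^n` with `n ≥ 1` maximal (and `n < o(g)` when
`g` has finite order). -/
def IsRootOf (r g : W Γ o) : Prop :=
  ∃ n : ℕ, 1 ≤ n ∧ g = r ^ n ∧
    (orderOf g = 0 → ∀ (r' : W Γ o) (m : ℕ), 1 ≤ m → g = r' ^ m → m ≤ n) ∧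
    (orderOf g ≠ 0 → n < orderOf g ∧
      ∀ (r' : W Γ o) (m : ℕ), 1 ≤ m → m < orderOf g → g = r' ^ m → m ≤ n)

/-- The rank of `g`: the number of vertices of the labeled graph `K(u)`, i.e. the
number of connected components of `⟨csupp g⟩ᶜ` plus `|lk (csupp g)|`. -/
noncomputable def rk (g : W Γ o) : ℕ :=
  Nat.card ((SimpleGraph.induce (csupp Γ o g) Γᶜ).ConnectedComponent) +
    (lkSet Γ (csupp Γ o g)).ncard

/-- `u = z₁^{m₁} ⋯ z_s^{m_s}` is a basic form of the cyclically reduced element `u`: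
a commuting product of powers of roots whose supports are the connected components of
`⟨supp u⟩ᶜ`. -/
def IsBasicForm (u : W Γ o) (s : ℕ) (z : Fin s → W Γ o) (m : Fin s → ℕ) : Prop :=
  IsCR Γ o u ∧
  (∀ i j, Commute (z i) (z j)) ∧
  u = (List.ofFn fun i => z i ^ m i).prod ∧
  (∀ i, 1 ≤ m i) ∧
  (∀ i, IsRootOf Γ o (z i) (z i ^ m i)) ∧
  (∀ i, IsCompOf Γᶜ (supp Γ o u) (supp Γ o (z i))) ∧
  (∀ i j, i ≠ j → Disjoint (supp Γ o (z i)) (supp Γ o (z j))) ∧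
  supp Γ o u = ⋃ i, supp Γ o (z i)

/-- Labeled graph automorphisms. -/
def IsLabeledGraphAuto (θ : MulAut (W Γ o)) : Prop :=
  ∃ γ : Γ ≃g Γ, (∀ v, o (γ v) = o v) ∧ ∀ v, θ (gen Γ o v) = gen Γ o (γ v)

/-- Factor automorphisms. -/
def IsFactorAuto (θ : MulAut (W Γ o)) : Prop :=
  ∃ (v : V) (m : ℤ),
    ((o v = 0 ∧ m = -1) ∨ (o v ≠ 0 ∧ m ≠ 1 ∧ Int.gcd m (o v) = 1)) ∧
    θ (gen Γ o v) = gen Γ o v ^ m ∧ ∀ z, z ≠ v → θ (gen Γ o z) = gen Γ o z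

/-- The map `x ↦ x y^q`, fixing all other vertices, extends to an endomorphism. -/
def TransvectionExtends (x y : V) (q : ℕ) : Prop :=
  ∃ e : W Γ o →* W Γ o, e (gen Γ o x) = gen Γ o x * gen Γ o y ^ q ∧
    ∀ z, z ≠ x → e (gen Γ o z) = gen Γ o z

/-- `θ` is the dominated transvection `τ_{x,y}^q` with `q ≥ 1` minimal well-defined. -/
def IsDTransvOn (x y : V) (θ : MulAut (W Γ o)) : Prop :=
  x ≠ y ∧ ∃ q : ℕ, 1 ≤ q ∧ TransvectionExtends Γ o x y q ∧
    (∀ q' : ℕ, 1 ≤ q' → TransvectionExtends Γ o x y q' → q ≤ q') ∧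
    θ (gen Γ o x) = gen Γ o x * gen Γ o y ^ q ∧
    ∀ z, z ≠ x → θ (gen Γ o z) = gen Γ o z

/-- Well-defined dominated transvections. -/
def IsDominatedTransvection (θ : MulAut (W Γ o)) : Prop := ∃ x y, IsDTransvOn Γ o x y θ

/-- `★`-transvections: dominated transvections with `x` adjacent to `y`. -/
def IsStarTransvection (θ : MulAut (W Γ o)) : Prop :=
  ∃ x y, Γ.Adj x y ∧ IsDTransvOn Γ o x y θ

/-- Partial conjugations `σ_{K,v}`. -/
def IsPartialConj (θ : MulAut (W Γ o)) : Prop :=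
  ∃ (v : V) (K : Set V), IsCompOf Γ ((vstar Γ v)ᶜ) K ∧
    (∀ x ∈ K, θ (gen Γ o x) = gen Γ o v * gen Γ o x * (gen Γ o v)⁻¹) ∧
    (∀ x, x ∉ K → θ (gen Γ o x) = gen Γ o x)

/-- The generating set `𝒢` of elementary automorphisms. -/
def ElemSet : Set (MulAut (W Γ o)) :=
  {θ | IsLabeledGraphAuto Γ o θ ∨ IsFactorAuto Γ o θ ∨
    IsDominatedTransvection Γ o θ ∨ IsPartialConj Γ o θ}

/-- The subgroup `E(G)` generated by the elementary automorphisms. -/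
def EGroup : Subgroup (MulAut (W Γ o)) := Subgroup.closure (ElemSet Γ o)

/-- The generating set `𝒢★`. -/
def GStarSet : Set (MulAut (W Γ o)) :=
  {θ | IsLabeledGraphAuto Γ o θ ∨ IsFactorAuto Γ o θ ∨
    IsStarTransvection Γ o θ ∨ IsPartialConj Γ o θ}

/-- `θ` is simple: `v ∈ csupp θ(v)` and `⟨csupp θ(v)⟩ᶜ` is connected, for all `v`. -/
def IsSimple (θ : MulAut (W Γ o)) : Prop :=
  ∀ v : V, v ∈ csupp Γ o (θ (gen Γ o v)) ∧
    (SimpleGraph.induce (csupp Γ o (θ (gen Γ o v))) Γᶜ).Connected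

/-- `θ` is quasi-simple: `⟨csupp θ(v)⟩ᶜ` is connected and `csupp θ(v) ⊆ Γ_v`, for all `v`. -/
def IsQuasiSimple (θ : MulAut (W Γ o)) : Prop :=
  ∀ v : V, (SimpleGraph.induce (csupp Γ o (θ (gen Γ o v))) Γᶜ).Connected ∧
    csupp Γ o (θ (gen Γ o v)) ⊆ GammaSet Γ v

/-- `θ` is conjugating: `θ(x)` is conjugate to `x` for all vertices `x`. -/
def IsConjugating (θ : MulAut (W Γ o)) : Prop :=
  ∀ x : V, ∃ w : W Γ o, θ (gen Γ o x) = w * gen Γ o x * w⁻¹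

/-- `Δ` is a maximal complete subgraph (maximal clique) of `Γ`. -/
def IsMaxClique (Δ : Set V) : Prop :=
  Γ.IsClique Δ ∧ ∀ Δ' : Set V, Γ.IsClique Δ' → Δ ⊆ Δ' → Δ' = Δ

/-- Evaluation of a single letter `v^{±1}`. -/
def evalLetter (x : V × Bool) : W Γ o := if x.2 then gen Γ o x.1 else (gen Γ o x.1)⁻¹

/-- Evaluation of a word of letters. -/
def evalL (l : List (V × Bool)) : W Γ o := (l.map (evalLetter Γ o)).prod

/-- `x` is a first letter of `g`, i.e. `g = x g'` reduced. -/
def IsFirstLetter (x : V × Bool) (g : W Γ o) : Prop :=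
  len Γ o ((evalLetter Γ o x)⁻¹ * g) + 1 = len Γ o g

/-- `x` is a last letter of `g`, i.e. `g = g' x` reduced. -/
def IsLastLetter (x : V × Bool) (g : W Γ o) : Prop :=
  len Γ o (g * (evalLetter Γ o x)⁻¹) + 1 = len Γ o g

/-- A single conjugation step `a ↦ x a x⁻¹` is of reduction type `k ∈ {1,2,3,4}`. -/
def StepType (k : ℕ) (x : V × Bool) (a : W Γ o) : Prop :=
  match k with
  | 1 => ∀ s ∈ supp Γ o a, Commute (gen Γ o s) (gen Γ o x.1)
  | 2 => IsFirstLetter Γ o (x.1, !x.2) a ∧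
      ¬ IsLastLetter Γ o x (evalLetter Γ o x * a)
  | 3 => IsLastLetter Γ o x a ∧
      ¬ IsFirstLetter Γ o (x.1, !x.2) (a * (evalLetter Γ o x)⁻¹)
  | 4 => len Γ o (evalLetter Γ o x * a * (evalLetter Γ o x)⁻¹) = len Γ o a + 2
  | _ => False

/-- Conjugation by a letter. -/
def conjLetter (x : V × Bool) (a : W Γ o) : W Γ o :=
  evalLetter Γ o x * a * (evalLetter Γ o x)⁻¹

/-- Apply a list of letters (given right-to-left) by successive conjugation. -/
def applyRev : List (V × Bool) → W Γ o → W Γ o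
  | [], a => a
  | x :: xs, a => applyRev xs (conjLetter Γ o x a)

/-- Each successive conjugation step by the letters (listed right-to-left) has type `k`. -/
def StepsRev (k : ℕ) : List (V × Bool) → W Γ o → Prop
  | [], _ => True
  | x :: xs, a => StepType Γ o k x a ∧ StepsRev k xs (conjLetter Γ o x a)

/-- `w₄w₃w₂w₁` (as letter words `l4 l3 l2 l1`) is a reduction decomposition of
`w = w₄w₃w₂w₁` relative to the cyclically reduced element `u`: the concatenation is
reduced, computing `wuw⁻¹` letter by letter from the right each letter of `w_k` effects
a reduction of type `k`, and `w₁, w₂, w₃` pairwise commute. -/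
def IsReductionDecomp (u : W Γ o) (l4 l3 l2 l1 : List (V × Bool)) : Prop :=
  (l4 ++ l3 ++ l2 ++ l1).length = len Γ o (evalL Γ o (l4 ++ l3 ++ l2 ++ l1)) ∧
  StepsRev Γ o 1 l1.reverse u ∧
  StepsRev Γ o 2 l2.reverse (applyRev Γ o l1.reverse u) ∧
  StepsRev Γ o 3 l3.reverse (applyRev Γ o (l2 ++ l1).reverse u) ∧
  StepsRev Γ o 4 l4.reverse (applyRev Γ o (l3 ++ l2 ++ l1).reverse u) ∧
  Commute (evalL Γ o l1) (evalL Γ o l2) ∧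
  Commute (evalL Γ o l1) (evalL Γ o l3) ∧
  Commute (evalL Γ o l2) (evalL Γ o l3)

/-- `b` has no initial letter among the vertices of `S`. -/
def NoInitialLetterIn (S : Set V) (b : W Γ o) : Prop :=
  ∀ x ∈ S, ∀ e : Bool, ¬ IsFirstLetter Γ o (x, e) b

/-- `g = h v^{n₁} b₁ ⋯ v^{n_k} b_k` is a normal form for the amalgamated decomposition
`W(Γ) = W(v★) ∗_H W(Γ∖v)`, `H = ⟨lk v⟩`: `h ∈ H`, each `b_i ∈ W(Γ∖v)` has no initial
letter in `H`, and only `h`, `n₁` or `b_k` may be trivial. -/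
def IsNormalForm (v : V) (g h : W Γ o) (k : ℕ)
    (n : Fin k → ℤ) (b : Fin k → W Γ o) : Prop :=
  h ∈ genSubgroup Γ o (Γ.neighborSet v) ∧
  (∀ i, b i ∈ genSubgroup Γ o ({v}ᶜ : Set V)) ∧
  (∀ i, NoInitialLetterIn Γ o (Γ.neighborSet v) (b i)) ∧
  (∀ i : Fin k, (i : ℕ) ≠ 0 → n i ≠ 0) ∧
  (∀ i : Fin k, (i : ℕ) + 1 ≠ k → b i ≠ 1) ∧
  g = h * (List.ofFn fun i => gen Γ o v ^ n i * b i).prod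

end GP

namespace GP

section Walls

variable {V : Type} {Γ : SimpleGraph V} {o : V → ℕ}

/-! ### Generators and homomorphisms -/

lemma exists_hom {H : Type} [Group H] (f : V → H) (h1 : ∀ v, o v ≠ 0 → f v ^ o v = 1)
    (h2 : ∀ x y, Γ.Adj x y → Commute (f x) (f y)) :
    ∃ φ : W Γ o →* H, ∀ v, φ (gen Γ o v) = f v := by
  have h : ∀ r ∈ rels Γ o, FreeGroup.lift f r = 1 := by
    rintro r (⟨v, hv, rfl⟩ | ⟨x, y, hxy, rfl⟩)
    · simpa using h1 v hv
    · have := (h2 x y hxy).eq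
      simp only [map_mul, map_inv, FreeGroup.lift_apply_of, this]
      group
  exact ⟨PresentedGroup.toGroup h, fun v => PresentedGroup.toGroup.of h⟩

lemma hom_ext_gen {H : Type} [Group H] {φ ψ : W Γ o →* H}
    (h : ∀ v, φ (gen Γ o v) = ψ (gen Γ o v)) : φ = ψ :=
  PresentedGroup.ext h

lemma gen_pow_order (v : V) : gen Γ o v ^ o v = 1 := by
  by_cases hv : o v = 0
  · simp [hv]
  · have : (FreeGroup.of v ^ o v) ∈ rels Γ o := Or.inl ⟨v, hv, rfl⟩
    have h2 := PresentedGroup.one_of_mem this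
    rwa [map_pow] at h2

lemma gen_comm {x y : V} (h : Γ.Adj x y) : Commute (gen Γ o x) (gen Γ o y) := by
  have : (FreeGroup.of x * FreeGroup.of y * (FreeGroup.of x)⁻¹ * (FreeGroup.of y)⁻¹) ∈ rels Γ o :=
    Or.inr ⟨x, y, h, rfl⟩
  have h2 := PresentedGroup.one_of_mem this
  simp only [map_mul, map_inv] at h2
  exact commutatorElement_eq_one_iff_mul_comm.mp h2

lemma closure_gen : Subgroup.closure (Set.range (gen Γ o)) = ⊤ :=
  PresentedGroup.closure_range_of _

lemma gen_zpow_congr {v : V} {a b : ℤ} (h : (a : ZMod (o v)) = b) :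
    gen Γ o v ^ a = gen Γ o v ^ b := by
  rw [ZMod.intCast_eq_intCast_iff_dvd_sub] at h
  obtain ⟨c, hc⟩ := h
  have : b = a + o v * c := by omega
  rw [this, zpow_add, zpow_mul, zpow_natCast, gen_pow_order]
  simp

/-- Induction on an element of `W(Γ,o)` by appending syllables `u ^ a` on the right. -/
lemma gen_induction {P : W Γ o → Prop} (h1 : P 1)
    (h : ∀ g u (a : ℤ), P g → P (g * gen Γ o u ^ a)) (g : W Γ o) : P g := by
  have hg : g ∈ Subgroup.closure (Set.range (gen Γ o)) := by rw [closure_gen]; trivial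
  induction hg using Subgroup.closure_induction_right with
  | one => exact h1
  | mul_right x hx y hy ih =>
    obtain ⟨u, rfl⟩ := hy
    simpa using h x u 1 ih
  | mul_inv_cancel x hx y hy ih =>
    obtain ⟨u, rfl⟩ := hy
    simpa using h x u (-1) ih

lemma exists_word (g : W Γ o) : ∃ l, evalWord Γ o l = g := by
  induction g using gen_induction with
  | h1 => exact ⟨[], rfl⟩
  | h g u a ih =>
    obtain ⟨l, rfl⟩ := ih
    exact ⟨l ++ [(u, a)], by simp [evalWord]⟩

lemma evalWord_cons (u : V) (a : ℤ) (l : List (V × ℤ)) :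
    evalWord Γ o ((u, a) :: l) = gen Γ o u ^ a * evalWord Γ o l := by
  simp [evalWord]

/-! ### The wall-crossing cocycle -/

variable (Γ o) in
/-- The subgroup `⟨v★⟩`. A wall of type `v` is a left coset of it; the coset `x⟨v★⟩` is the wall of
the conjugate `x v x⁻¹`, and is represented below by any of its points `x`. -/
abbrev starGrp (v : V) : Subgroup (W Γ o) := genSubgroup Γ o (vstar Γ v)

lemma gen_mem_star {u v : V} (h : u ∈ vstar Γ v) : gen Γ o u ∈ starGrp Γ o v :=
  Subgroup.subset_closure ⟨u, h, rfl⟩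

lemma mem_star_comm {v : V} {s : W Γ o} (hs : s ∈ starGrp Γ o v) : Commute s (gen Γ o v) := by
  have : starGrp Γ o v ≤ Subgroup.centralizer {gen Γ o v} := by
    rw [starGrp, genSubgroup, Subgroup.closure_le]
    rintro _ ⟨u, hu, rfl⟩
    rw [SetLike.mem_coe, Subgroup.mem_centralizer_singleton_iff]
    rcases hu with rfl | hu
    · rfl
    · exact (gen_comm (o := o) hu).symm.eq
  exact (Subgroup.mem_centralizer_singleton_iff.mp (this hs))

lemma vstar_symm {u v : V} (h : u ∈ vstar Γ v) : v ∈ vstar Γ u := by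
  rcases h with rfl | h
  · exact Or.inl rfl
  · exact Or.inr (SimpleGraph.Adj.symm h)

open Classical in
/-- Existence of the wall-crossing cocycle `cc` below. It is read off from the homomorphism
`u ↦ (c(u), u)` into the semidirect product of `W(Γ,o) → ℤ/o(v)` with `W(Γ,o)`, which respects the
relations because `v` and its neighbours fix the indicator function of `⟨v★⟩`. -/
lemma exists_cocycle (v : V) : ∃ c : W Γ o → W Γ o → ZMod (o v),
    (∀ g g' x, c (g * g') x = c g x + c g' (g⁻¹ * x)) ∧
    ∀ u x, c (gen Γ o u) x = if u = v ∧ x ∈ starGrp Γ o v then 1 else 0 := by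
  let act : MulDistribMulAction (W Γ o) (W Γ o → Multiplicative (ZMod (o v))) :=
    arrowMulDistribMulAction
  let tw : W Γ o →* MulAut (W Γ o → Multiplicative (ZMod (o v))) :=
    MulDistribMulAction.toMulAut _ _
  have tw_apply : ∀ g f x, tw g f x = f (g⁻¹ * x) := fun g f x => rfl
  let δ : W Γ o → Multiplicative (ZMod (o v)) :=
    fun x => Multiplicative.ofAdd (if x ∈ starGrp Γ o v then 1 else 0)
  have hδ : ∀ u ∈ vstar Γ v, tw (gen Γ o u) δ = δ := by
    intro u hu
    funext x
    rw [tw_apply]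
    simp only [δ, Subgroup.mul_mem_cancel_left _ (inv_mem (gen_mem_star (o := o) hu))]
  let F : V → (W Γ o → Multiplicative (ZMod (o v))) ⋊[tw] W Γ o :=
    fun u => ⟨if u = v then δ else 1, gen Γ o u⟩
  have hF : ∀ u, u ≠ v → F u = SemidirectProduct.inr (gen Γ o u) := by
    intro u hu
    simp only [F, if_neg hu]
    rfl
  have hcom : ∀ u ∈ vstar Γ v,
      Commute (SemidirectProduct.inl δ : _ ⋊[tw] _) (SemidirectProduct.inr (gen Γ o u)) := by
    intro u hu
    have h := SemidirectProduct.inl_aut (φ := tw) (gen Γ o u) δ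
    rw [hδ u hu] at h
    rw [commute_iff_eq]
    nth_rewrite 1 [h]
    simp [mul_assoc]
  have hFv : F v = SemidirectProduct.inl δ * SemidirectProduct.inr (gen Γ o v) := by
    rw [← SemidirectProduct.mk_eq_inl_mul_inr]
    simp [F]
  obtain ⟨φ, hφ⟩ := exists_hom (Γ := Γ) (o := o) F (by
      intro u hu
      by_cases huv : u = v
      · subst huv
        rw [hFv, (hcom u (Or.inl rfl)).mul_pow, ← map_pow, ← map_pow, gen_pow_order]
        have : δ ^ o u = 1 := by
          funext x
          simp only [δ, Pi.pow_apply, ← ofAdd_nsmul]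
          simp
        simp [this]
      · rw [hF u huv, ← map_pow, gen_pow_order, map_one]) (by
      have key : ∀ y, Γ.Adj v y → Commute (F v) (F y) := by
        intro y hy
        rw [hFv, hF y hy.ne']
        exact (hcom y (Or.inr hy)).mul_left ((gen_comm hy).map SemidirectProduct.inr)
      intro x y hxy
      by_cases hx : x = v
      · subst hx; exact key y hxy
      by_cases hy : y = v
      · subst hy; exact (key x hxy.symm).symm
      rw [hF x hx, hF y hy]
      exact (gen_comm hxy).map SemidirectProduct.inr)
  have hr : ∀ g, (φ g).right = g := by
    have : SemidirectProduct.rightHom.comp φ = MonoidHom.id (W Γ o) := by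
      apply hom_ext_gen
      intro u
      simp [hφ, F]
    intro g
    exact DFunLike.congr_fun this g
  refine ⟨fun g x => Multiplicative.toAdd ((φ g).left x), ?_, ?_⟩
  · intro g g' x
    simp only []
    rw [map_mul, SemidirectProduct.mul_left, Pi.mul_apply, toAdd_mul, tw_apply, hr]
  · intro u x
    simp only [hφ, F]
    by_cases huv : u = v <;> simp [huv, δ]

variable (Γ o) in
/-- The wall-crossing cocycle: `cc Γ o v g x : ℤ/o(v)` is the signed number of times a word for `g`
crosses the wall `x⟨v★⟩`. It labels the sector of that wall containing `g`, the sector of `1` having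
label `0`. -/
noncomputable def cc (v : V) : W Γ o → W Γ o → ZMod (o v) := (exists_cocycle v).choose

lemma cc_mul (v : V) (g g' x : W Γ o) :
    cc Γ o v (g * g') x = cc Γ o v g x + cc Γ o v g' (g⁻¹ * x) :=
  (exists_cocycle v).choose_spec.1 g g' x

open Classical in
lemma cc_gen (v u : V) (x : W Γ o) :
    cc Γ o v (gen Γ o u) x = if u = v ∧ x ∈ starGrp Γ o v then 1 else 0 :=
  (exists_cocycle v).choose_spec.2 u x

lemma cc_one (v : V) (x : W Γ o) : cc Γ o v 1 x = 0 := by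
  have := cc_mul v 1 1 x
  simpa using this

lemma cc_inv (v : V) (g x : W Γ o) : cc Γ o v g⁻¹ x = - cc Γ o v g (g * x) := by
  have := cc_mul v g g⁻¹ (g * x)
  rw [mul_inv_cancel, cc_one, inv_mul_cancel_left] at this
  exact (neg_eq_of_add_eq_zero_right this.symm).symm

lemma zpow_mem_star {v u : V} (h : u ∈ vstar Γ v) (a : ℤ) :
    gen Γ o u ^ a ∈ starGrp Γ o v := zpow_mem (gen_mem_star h) a

lemma self_mem_vstar (v : V) : v ∈ vstar Γ v := Or.inl rfl

open Classical in
lemma cc_zpow (v u : V) (a : ℤ) (x : W Γ o) :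
    cc Γ o v (gen Γ o u ^ a) x = if u = v ∧ x ∈ starGrp Γ o v then (a : ZMod (o v)) else 0 := by
  induction a using Int.induction_on with
  | zero => simp [cc_one]
  | succ n ih =>
    rw [zpow_add_one, cc_mul, ih, cc_gen]
    by_cases huv : u = v
    · subst huv
      rw [Subgroup.mul_mem_cancel_left _ (inv_mem (zpow_mem_star (self_mem_vstar u) _))]
      by_cases hx : x ∈ starGrp Γ o u <;> simp [hx]
    · simp [huv]
  | pred n ih =>
    rw [zpow_sub_one, cc_mul, ih, cc_inv, cc_gen]
    by_cases huv : u = v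
    · subst huv
      rw [Subgroup.mul_mem_cancel_left _ (gen_mem_star (self_mem_vstar u)),
        Subgroup.mul_mem_cancel_left _ (inv_mem (zpow_mem_star (self_mem_vstar u) _))]
      by_cases hx : x ∈ starGrp Γ o u <;> simp [hx, sub_eq_add_neg]
    · simp [huv]

/-- The crossing number depends on the wall `x⟨v★⟩` only. -/
lemma cc_mul_star (v : V) (g x : W Γ o) {s : W Γ o} (hs : s ∈ starGrp Γ o v) :
    cc Γ o v g (x * s) = cc Γ o v g x := by
  induction g using gen_induction with
  | h1 => simp [cc_one]
  | h g u a ih =>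
    rw [cc_mul, cc_mul, ih, cc_zpow, cc_zpow, ← mul_assoc,
      Subgroup.mul_mem_cancel_right _ hs]

/-- The sector label is constant on `p⟨T⟩` unless the wall passes through `p⟨T⟩` and has its type
in `T`. -/
lemma cc_const (v : V) (T : Set V) (p x : W Γ o)
    (h : v ∈ T → ∀ m ∈ genSubgroup Γ o T, (p * m)⁻¹ * x ∉ starGrp Γ o v)
    {m : W Γ o} (hm : m ∈ genSubgroup Γ o T) : cc Γ o v (p * m) x = cc Γ o v p x := by
  have step : ∀ g ∈ genSubgroup Γ o T, ∀ u ∈ T, ∀ a : ℤ,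
      cc Γ o v (p * (g * gen Γ o u ^ a)) x = cc Γ o v (p * g) x := by
    intro g hg u hu a
    rw [← mul_assoc, cc_mul v (p * g), cc_zpow, if_neg, add_zero]
    rintro ⟨rfl, h2⟩
    exact h hu g hg h2
  induction hm using Subgroup.closure_induction_right with
  | one => simp
  | mul_right g hg y hy ih =>
    obtain ⟨u, hu, rfl⟩ := hy
    rw [← ih, ← step g hg u hu 1, zpow_one]
  | mul_inv_cancel g hg y hy ih =>
    obtain ⟨u, hu, rfl⟩ := hy
    rw [← ih, ← step g hg u hu (-1), zpow_neg_one]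

/-- A wall of type `v` separates no two points of a wall of type `u ∉ v★`. -/
lemma cc_const_star {u v : V} (huv : u ∉ vstar Γ v) (p x : W Γ o) {s : W Γ o}
    (hs : s ∈ starGrp Γ o u) : cc Γ o v (p * s) x = cc Γ o v p x :=
  cc_const v (vstar Γ u) p x (fun h => absurd (vstar_symm h) huv) hs

/-- For `u ∈ v★`, the power `p u ^ a p⁻¹` of a rotation preserves the `v`-wall through `p`, and
shifts its sectors by `a` or `0` as `u = v` or not. -/
lemma cc_rot [DecidableEq V] {u v : V} (huv : u ∈ vstar Γ v) (p y : W Γ o) (a : ℤ) :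
    cc Γ o v (p * gen Γ o u ^ a * p⁻¹ * y) p =
      (if u = v then (a : ZMod (o v)) else 0) + cc Γ o v y p := by
  have h1 : gen Γ o u ^ (-a) ∈ starGrp Γ o v := zpow_mem_star huv _
  have e1 : p⁻¹ * p = 1 := by group
  have e2 : (p * gen Γ o u ^ a)⁻¹ * p = gen Γ o u ^ (-a) := by group
  have e3 : (p * gen Γ o u ^ a * p⁻¹)⁻¹ * p = p * gen Γ o u ^ (-a) := by group
  rw [cc_mul, cc_mul, cc_mul, e1, e2, e3, cc_mul_star v y p h1, cc_inv, cc_mul_star v p p h1,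
    cc_zpow]
  by_cases h : u = v <;> simp [h, one_mem]

lemma one_ne_zero_label (ho : IsLabeling o) (v : V) : (1 : ZMod (o v)) ≠ 0 := by
  have : o v ≠ 1 := by
    rcases ho v with h | h
    · omega
    · exact h.one_lt.ne'
  intro h
  have h2 := (ZMod.intCast_zmod_eq_zero_iff_dvd 1 (o v)).mp (by simpa using h)
  have h3 : o v ∣ 1 := by exact_mod_cast h2
  exact this (Nat.dvd_one.mp h3)

/-- The centralizer of `v` is `⟨v★⟩`. -/
lemma mem_star_of_comm (ho : IsLabeling o) {v : V} {y : W Γ o} (h : Commute y (gen Γ o v)) :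
    y ∈ starGrp Γ o v := by
  by_contra hy
  have h1 := cc_mul v y (gen Γ o v) 1
  have h2 := cc_mul v (gen Γ o v) y 1
  rw [h.eq, h2, cc_gen, cc_gen, if_pos ⟨rfl, one_mem _⟩, if_neg, mul_one,
    ← one_mul (gen Γ o v)⁻¹, cc_mul_star v y 1 (inv_mem (gen_mem_star (self_mem_vstar v)))] at h1
  · have : (1 : ZMod (o v)) = 0 := by linear_combination h1
    exact one_ne_zero_label ho v this
  · rintro ⟨-, h3⟩
    exact hy (by simpa using h3)

/-- A rotation depends on its wall only, not on the representative. -/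
lemma rot_eq_of_mem_star {v : V} {p w : W Γ o} (h : w⁻¹ * p ∈ starGrp Γ o v) :
    w * gen Γ o v * w⁻¹ = p * gen Γ o v * p⁻¹ := by
  have := (mem_star_comm h).eq
  have e : p = w * (w⁻¹ * p) := by group
  rw [e]
  generalize w⁻¹ * p = s at *
  calc w * gen Γ o v * w⁻¹ = w * (gen Γ o v * s) * s⁻¹ * w⁻¹ := by group
    _ = _ := by rw [← this]; group

/-- Walls whose rotations commute meet. The rotation about the wall of `u` preserves the wall of `v`
and changes the `u`-sector there, so the former wall crosses the latter. -/
lemma exists_common (ho : IsLabeling o) {u v : V} {x y : W Γ o}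
    (h : Commute (x * gen Γ o u * x⁻¹) (y * gen Γ o v * y⁻¹)) :
    ∃ p, x⁻¹ * p ∈ starGrp Γ o u ∧ y⁻¹ * p ∈ starGrp Γ o v := by
  classical
  have hm : y⁻¹ * (x * gen Γ o u * x⁻¹) * y ∈ starGrp Γ o v := by
    apply mem_star_of_comm ho
    have := h.eq
    rw [commute_iff_eq]
    calc y⁻¹ * (x * gen Γ o u * x⁻¹) * y * gen Γ o v
        = y⁻¹ * (x * gen Γ o u * x⁻¹ * (y * gen Γ o v * y⁻¹)) * y := by group
      _ = _ := by rw [this]; group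
  by_contra hno
  push Not at hno
  have hc := cc_const u (vstar Γ v) y x (fun _ m hm' hmem => hno (y * m)
    (by have := inv_mem hmem; simpa [mul_assoc] using this) (by simpa using hm')) hm
  have e : y * (y⁻¹ * (x * gen Γ o u * x⁻¹) * y) = x * gen Γ o u ^ (1 : ℤ) * x⁻¹ * y := by group
  rw [e, cc_rot (self_mem_vstar u), if_pos rfl] at hc
  have : (1 : ZMod (o u)) = 0 := by push_cast at hc; linear_combination hc
  exact one_ne_zero_label ho u this

/-! ### Folding along a wall -/

lemma gen_zpow_eq_one {v : V} {s : ℤ} (hs : (s : ZMod (o v)) = 0) :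
    gen Γ o v ^ s = 1 := by
  rw [gen_zpow_congr (b := 0) (by simpa using hs), zpow_zero]

/-- Folding the sector of `g` at the wall `x⟨v★⟩` onto the sector of `1`, by a power of the rotation
`x v x⁻¹`, deletes from a word for `g` the syllables that cross the wall. -/
lemma fold_word (v : V) (l : List (V × ℤ)) (x : W Γ o) :
    ∃ (s : ℤ) (l' : List (V × ℤ)), (s : ZMod (o v)) = cc Γ o v (evalWord Γ o l) x ∧
      evalWord Γ o l' = x * gen Γ o v ^ (-s) * x⁻¹ * evalWord Γ o l ∧
      l'.length ≤ l.length ∧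
      (cc Γ o v (evalWord Γ o l) x ≠ 0 → l'.length < l.length) := by
  classical
  induction l generalizing x with
  | nil => exact ⟨0, [], by simp [evalWord, cc_one], by simp [evalWord], le_rfl,
      fun h => absurd (cc_one v x) (by simpa [evalWord] using h)⟩
  | cons q l ih =>
    obtain ⟨u, a⟩ := q
    obtain ⟨s, l', h1, h2, h3, h4⟩ := ih ((gen Γ o u ^ a)⁻¹ * x)
    by_cases hc : u = v ∧ x ∈ starGrp Γ o v
    · obtain ⟨rfl, hx⟩ := hc
      refine ⟨a + s, l', ?_, ?_, ?_, ?_⟩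
      · rw [evalWord_cons, cc_mul, cc_zpow, if_pos ⟨rfl, hx⟩, ← h1]
        push_cast
        ring
      · rw [h2, evalWord_cons]
        have hcm := ((mem_star_comm hx).zpow_right (-s)).eq
        have hcm' := ((mem_star_comm hx).zpow_right (-(a + s))).eq
        rw [hcm']
        calc _ = gen Γ o u ^ (-a) * (x * gen Γ o u ^ (-s)) * x⁻¹ * gen Γ o u ^ a
              * evalWord Γ o l := by group
          _ = _ := by rw [hcm]; group
      · simp only [List.length_cons]; omega
      · simp only [List.length_cons]; omega
    · have hcc : cc Γ o v (evalWord Γ o ((u, a) :: l)) x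
          = cc Γ o v (evalWord Γ o l) ((gen Γ o u ^ a)⁻¹ * x) := by
        rw [evalWord_cons, cc_mul, cc_zpow, if_neg hc, zero_add]
      refine ⟨s, (u, a) :: l', by rw [hcc, h1], ?_, by simpa using h3, ?_⟩
      · rw [evalWord_cons, evalWord_cons, h2]; group
      · rw [hcc]; simpa using h4

/-- If the wall `y⟨v★⟩` avoids the sector of `1` at the wall `z⟨u★⟩`, then it does not separate `1`
from any `g` in that sector: a path from `1` to `g` folded at the wall of `u` stays in the sector of
`1`, hence never meets the wall of `v`. -/
lemma cc_eq_zero_of_sector {u v : V} {z y : W Γ o}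
    (hsec : ∀ s ∈ starGrp Γ o v, cc Γ o u (y * s) z ≠ 0) {g : W Γ o}
    (hg : cc Γ o u g z = 0) : cc Γ o v g y = 0 := by
  classical
  have key : ∀ g : W Γ o, ∃ s : ℤ, (s : ZMod (o u)) = cc Γ o u g z ∧
      cc Γ o v (z * gen Γ o u ^ (-s) * z⁻¹ * g) y = 0 := by
    intro g
    induction g using gen_induction with
    | h1 => exact ⟨0, by simp [cc_one], by simp [cc_one]⟩
    | h g x a ih =>
      obtain ⟨s, h1, h2⟩ := ih
      by_cases hc : x = u ∧ g⁻¹ * z ∈ starGrp Γ o u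
      · obtain ⟨rfl, hx⟩ := hc
        refine ⟨s + a, ?_, ?_⟩
        · rw [cc_mul, cc_zpow, if_pos ⟨rfl, hx⟩, ← h1]; push_cast; rfl
        · have hcm := ((mem_star_comm hx).zpow_right (-a)).eq
          have e : z * gen Γ o x ^ (-(s + a)) * z⁻¹ * (g * gen Γ o x ^ a)
              = z * gen Γ o x ^ (-s) * z⁻¹ * g := by
            calc _ = z * gen Γ o x ^ (-s) * z⁻¹ * g * ((g⁻¹ * z) * gen Γ o x ^ (-a)) * (z⁻¹ * g)
                  * gen Γ o x ^ a := by group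
              _ = _ := by rw [hcm]; group
          rw [e, h2]
      · refine ⟨s, ?_, ?_⟩
        · rw [cc_mul, cc_zpow, if_neg hc, add_zero, h1]
        · rw [← mul_assoc, cc_mul, h2, zero_add, cc_zpow, if_neg]
          rintro ⟨rfl, h3⟩
          -- A crossing would put the folded point on the wall of `v`.
          apply hsec _ (inv_mem h3)
          have e : y * ((z * gen Γ o u ^ (-s) * z⁻¹ * g)⁻¹ * y)⁻¹
              = z * gen Γ o u ^ (-s) * z⁻¹ * g := by group
          rw [e, cc_rot (self_mem_vstar u), if_pos rfl, ← h1]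
          push_cast
          ring
  obtain ⟨s, h1, h2⟩ := key g
  rw [hg] at h1
  have : gen Γ o u ^ (-s) = 1 := gen_zpow_eq_one (by push_cast; rw [h1, neg_zero])
  rw [this] at h2
  simpa using h2

/-- For two disjoint walls, each having the other in its sector of `1`, a nontrivial rotation about
the first one carries the sector of `1` of the first into the sector of `1` of the second. -/
lemma cc_rot_far {u v : V} (huv : u ∉ vstar Γ v) {x y g : W Γ o}
    (h1 : cc Γ o u y x = 0) (h2 : cc Γ o v x y = 0) {a : ℤ} (ha : (a : ZMod (o u)) ≠ 0)
    (hg : cc Γ o u g x = 0) : cc Γ o v (x * gen Γ o u ^ a * x⁻¹ * g) y = 0 := by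
  classical
  have hvu : v ∉ vstar Γ u := fun h => huv (vstar_symm h)
  -- The point `p = x u ^ (-r)` of the first wall lies in its sector of `1`.
  obtain ⟨r, hr⟩ := ZMod.intCast_surjective (cc Γ o u x x)
  have hp : cc Γ o u (x * gen Γ o u ^ (-r)) x = 0 := by
    rw [cc_mul, cc_zpow, inv_mul_cancel, if_pos ⟨rfl, one_mem _⟩, ← hr]
    push_cast
    ring
  have hsec : ∀ s ∈ starGrp Γ o v,
      cc Γ o u ((x * gen Γ o u ^ (-a) * x⁻¹ * y) * s) x ≠ 0 := by
    intro s hs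
    rw [cc_const_star hvu _ _ hs, cc_rot (self_mem_vstar u), if_pos rfl, h1]
    simpa using ha
  have e : (x * gen Γ o u ^ a * x⁻¹)⁻¹ * y = x * gen Γ o u ^ (-a) * x⁻¹ * y := by group
  have hA := cc_mul v (x * gen Γ o u ^ a * x⁻¹) (x * gen Γ o u ^ (-r)) y
  have e2 : x * gen Γ o u ^ a * x⁻¹ * (x * gen Γ o u ^ (-r)) = x * gen Γ o u ^ (a - r) := by group
  rw [e, cc_eq_zero_of_sector hsec hp, e2,
    cc_const_star huv x y (zpow_mem_star (self_mem_vstar u) _), h2, add_zero] at hA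
  rw [cc_mul, ← hA, e, cc_eq_zero_of_sector hsec hg, add_zero]

/-- Ping-pong. Suppose no wall `w v⟨v★⟩` separates `1` from another one with type
outside `v★`. Then `g` and `θ g` have the same
sector labels, for the walls `⟨v★⟩` and `w v⟨v★⟩` respectively. Moreover `1` is the only element with all labels `0` at
the walls `⟨v★⟩`. -/
lemma ping_pong (ho : IsLabeling o) (θ : W Γ o →* W Γ o) (w : V → W Γ o)
    (hθ : ∀ v, θ (gen Γ o v) = w v * gen Γ o v * (w v)⁻¹)
    (hsep : ∀ u v, u ∉ vstar Γ v → cc Γ o v (w u) (w v) = 0)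
    (n : ℕ) (l : List (V × ℤ)) (hl : l.length ≤ n) :
    (∀ v, cc Γ o v (θ (evalWord Γ o l)) (w v) = cc Γ o v (evalWord Γ o l) 1) ∧
      ((∀ v, cc Γ o v (evalWord Γ o l) 1 = 0) → evalWord Γ o l = 1) := by
  classical
  induction n generalizing l with
  | zero =>
    have : l = [] := List.length_eq_zero_iff.mp (by omega)
    subst this
    simp [evalWord, cc_one]
  | succ n ih =>
    rcases l with _ | ⟨⟨u, a⟩, l⟩
    · simp [evalWord, cc_one]
    obtain ⟨s, l', h1, h2, h3, -⟩ := fold_word u l 1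
    simp only [List.length_cons] at hl
    obtain ⟨ih1, ih2⟩ := ih l' (by omega)
    have hg : evalWord Γ o ((u, a) :: l) = gen Γ o u ^ (a + s) * evalWord Γ o l' := by
      rw [h2, evalWord_cons]; group
    have hg0 : cc Γ o u (evalWord Γ o l') 1 = 0 := by
      rw [h2, cc_rot (self_mem_vstar u), if_pos rfl, ← h1]
      push_cast
      ring
    rw [hg]
    -- From here on, `g = u ^ (a + s) g'` with `g'` shorter and in the sector of `1` at `⟨u★⟩`.
    by_cases h0 : ((a + s : ℤ) : ZMod (o u)) = 0
    · rw [gen_zpow_eq_one h0, one_mul]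
      exact ⟨ih1, ih2⟩
    have hz : ∀ b : ℤ, θ (gen Γ o u ^ b) = w u * gen Γ o u ^ b * (w u)⁻¹ := by
      intro b
      rw [map_zpow, hθ, conj_zpow]
    have key1 : gen Γ o u ^ (a + s) * evalWord Γ o l'
        = 1 * gen Γ o u ^ (a + s) * 1⁻¹ * evalWord Γ o l' := by group
    constructor
    · intro v
      by_cases huv : u ∈ vstar Γ v
      · obtain ⟨p, hpu, hpv⟩ : ∃ p, (w u)⁻¹ * p ∈ starGrp Γ o u ∧ (w v)⁻¹ * p ∈ starGrp Γ o v := by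
          apply exists_common ho
          rw [← hθ, ← hθ]
          exact (mem_star_comm (gen_mem_star huv)).map θ
        have e := cc_mul_star v (θ (gen Γ o u ^ (a + s) * evalWord Γ o l')) (w v) hpv
        have e' := cc_mul_star v (θ (evalWord Γ o l')) (w v) hpv
        rw [mul_inv_cancel_left] at e e'
        rw [key1, cc_rot huv, ← key1, ← e, map_mul, map_zpow, hθ, rot_eq_of_mem_star hpu, conj_zpow,
          cc_rot huv, e', ih1]
      · rw [map_mul, hz, cc_rot_far huv (hsep v u fun h => huv (vstar_symm h)) (hsep u v huv) h0
          (by rw [ih1, hg0]), key1, cc_rot_far huv (cc_one _ _) (cc_one _ _) h0 hg0]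
    · intro h
      exfalso
      have := h u
      rw [key1, cc_rot (self_mem_vstar u), if_pos rfl, hg0, add_zero] at this
      exact h0 this

/-- A conjugating automorphism whose walls do not separate each other from `1` is trivial: each
generator `u` is `θ g` for some `g ≠ 1`, so a wall of `θ` separates `u` from `1`, and the only wall
separating `u` from `1` is `⟨u★⟩`. -/
lemma eq_one_of_no_sep (ho : IsLabeling o) (θ : MulAut (W Γ o)) (w : V → W Γ o)
    (hθ : ∀ v, θ (gen Γ o v) = w v * gen Γ o v * (w v)⁻¹)
    (hsep : ∀ u v, u ∉ vstar Γ v → cc Γ o v (w u) (w v) = 0) : θ = 1 := by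
  classical
  have key : ∀ u, θ (gen Γ o u) = gen Γ o u := by
    intro u
    obtain ⟨g, hg⟩ := θ.surjective (gen Γ o u)
    obtain ⟨l, rfl⟩ := exists_word g
    obtain ⟨h1, h2⟩ := ping_pong ho θ.toMonoidHom w hθ hsep l.length l le_rfl
    have h3 : ∃ v, cc Γ o v (gen Γ o u) (w v) ≠ 0 := by
      by_contra! h
      have h4 : evalWord Γ o l = 1 := h2 fun v => by
        rw [← h1 v]
        simpa [hg] using h v
      rw [h4, map_one] at hg
      have h5 := cc_gen u u (1 : W Γ o)
      rw [← hg, cc_one, if_pos ⟨rfl, one_mem _⟩] at h5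
      exact one_ne_zero_label ho u h5.symm
    obtain ⟨v, hv⟩ := h3
    rw [cc_gen] at hv
    obtain ⟨rfl, hw⟩ : u = v ∧ w v ∈ starGrp Γ o v := by
      by_contra h
      exact hv (if_neg h)
    rw [hθ, (mem_star_comm hw).eq, mul_inv_cancel_right]
  have : θ.toMonoidHom = MonoidHom.id _ := hom_ext_gen key
  ext g
  exact DFunLike.congr_fun this g

/-! ### Partial conjugations -/

open Classical in
/-- Conjugation of a component `K` of `Γ ∖ v★` by `v ^ n`: an edge leaving `K` ends in `v★`. -/
lemma exists_partialConjHom {v : V} {K : Set V} (hK : IsCompOf Γ (vstar Γ v)ᶜ K) (n : ℤ) :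
    ∃ φ : W Γ o →* W Γ o, ∀ x, φ (gen Γ o x) =
      if x ∈ K then gen Γ o v ^ n * gen Γ o x * (gen Γ o v ^ n)⁻¹ else gen Γ o x := by
  obtain ⟨c, rfl⟩ := hK
  have key : ∀ x y, Γ.Adj x y → x ∈ Subtype.val '' c.supp → y ∉ Subtype.val '' c.supp →
      Commute (gen Γ o v ^ n * gen Γ o x * (gen Γ o v ^ n)⁻¹) (gen Γ o y) := by
    intro x y hxy hx hy
    have hyv : y ∈ vstar Γ v := by
      by_contra hyv
      obtain ⟨x, hx, rfl⟩ := hx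
      refine hy ⟨⟨y, hyv⟩, ?_, rfl⟩
      rw [SimpleGraph.ConnectedComponent.mem_supp_iff] at hx ⊢
      rw [← hx]
      exact (SimpleGraph.ConnectedComponent.connectedComponentMk_eq_of_adj
        (by simpa using hxy.symm))
    have h1 : Commute (gen Γ o v ^ n) (gen Γ o y) :=
      ((mem_star_comm (gen_mem_star hyv)).symm.zpow_left n)
    exact (h1.mul_left (gen_comm hxy)).mul_left h1.inv_left
  apply exists_hom
  · intro x _
    split_ifs
    · rw [conj_pow, gen_pow_order]; simp
    · exact gen_pow_order x
  · intro x y hxy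
    by_cases hx : x ∈ Subtype.val '' c.supp <;> by_cases hy : y ∈ Subtype.val '' c.supp
    · rw [if_pos hx, if_pos hy]
      exact (gen_comm hxy).map (MulAut.conj (gen Γ o v ^ n)).toMonoidHom
    · rw [if_pos hx, if_neg hy]
      exact key x y hxy hx hy
    · rw [if_neg hx, if_pos hy]
      exact (key y x hxy.symm hy hx).symm
    · rw [if_neg hx, if_neg hy]
      exact gen_comm hxy

lemma exists_partialConj {v : V} {K : Set V} (hK : IsCompOf Γ (vstar Γ v)ᶜ K) :
    ∃ σ : MulAut (W Γ o), IsPartialConj Γ o σ ∧ ∀ n : ℤ,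
      (∀ x ∈ K, (σ ^ n) (gen Γ o x) = gen Γ o v ^ n * gen Γ o x * (gen Γ o v ^ n)⁻¹) ∧
      (∀ x, x ∉ K → (σ ^ n) (gen Γ o x) = gen Γ o x) := by
  classical
  have hvK : v ∉ K := by
    obtain ⟨c, rfl⟩ := hK
    rintro ⟨y, -, hy⟩
    have h := y.2
    rw [hy] at h
    exact h (self_mem_vstar v)
  choose φ hφ using fun n : ℤ => exists_partialConjHom (o := o) hK n
  have hv : ∀ n, φ n (gen Γ o v) = gen Γ o v := fun n => by rw [hφ, if_neg hvK]
  have hcomp : ∀ m n, (φ m).comp (φ n) = φ (m + n) := by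
    intro m n
    apply hom_ext_gen
    intro x
    rw [MonoidHom.comp_apply, hφ n, hφ (m + n)]
    by_cases hx : x ∈ K
    · rw [if_pos hx, if_pos hx, map_mul, map_mul, map_inv, map_zpow, hv, hφ, if_pos hx]
      group
    · rw [if_neg hx, if_neg hx, hφ, if_neg hx]
  have h0 : φ 0 = MonoidHom.id _ := by
    apply hom_ext_gen
    intro x
    rw [hφ]
    simp
  let ψ : Multiplicative ℤ →* MulAut (W Γ o) := MonoidHom.mk'
    (fun n => MonoidHom.toMulEquiv (φ n.toAdd) (φ (-n.toAdd))
      (by rw [hcomp, neg_add_cancel, h0]) (by rw [hcomp, add_neg_cancel, h0]))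
    (fun m n => by
      ext g
      exact (DFunLike.congr_fun (hcomp m.toAdd n.toAdd) g).symm)
  have hψ : ∀ (n : ℤ) g, (ψ (Multiplicative.ofAdd 1) ^ n) g = φ n g := by
    intro n g
    rw [← map_zpow, ← ofAdd_zsmul]
    simp [ψ]
  have main : ∀ n : ℤ,
      (∀ x ∈ K, (ψ (Multiplicative.ofAdd 1) ^ n) (gen Γ o x)
        = gen Γ o v ^ n * gen Γ o x * (gen Γ o v ^ n)⁻¹) ∧
      (∀ x, x ∉ K → (ψ (Multiplicative.ofAdd 1) ^ n) (gen Γ o x) = gen Γ o x) :=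
    fun n => ⟨fun x hx => by rw [hψ, hφ, if_pos hx], fun x hx => by rw [hψ, hφ, if_neg hx]⟩
  refine ⟨ψ (Multiplicative.ofAdd 1), ⟨v, K, hK, ?_⟩, main⟩
  simpa using main 1

/-! ### Descent -/

/-- All walls with type in one component of `Γ ∖ v★` lie in the same sector of the wall of `v`. -/
lemma cc_component (ho : IsLabeling o) (θ : W Γ o →* W Γ o) (w : V → W Γ o)
    (hθ : ∀ v, θ (gen Γ o v) = w v * gen Γ o v * (w v)⁻¹) {v : V}
    {x y : ((vstar Γ v)ᶜ : Set V)} (h : (SimpleGraph.induce (vstar Γ v)ᶜ Γ).Reachable x y) :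
    cc Γ o v (w x) (w v) = cc Γ o v (w y) (w v) := by
  obtain ⟨q⟩ := h
  induction q with
  | nil => rfl
  | @cons a b c hab q ih =>
    rw [← ih]
    obtain ⟨p, hpa, hpb⟩ : ∃ p, (w a)⁻¹ * p ∈ starGrp Γ o a ∧ (w b)⁻¹ * p ∈ starGrp Γ o b := by
      apply exists_common ho
      rw [← hθ, ← hθ]
      exact (gen_comm (by simpa using hab)).map θ
    have h1 := cc_const_star a.2 (w a) (w v) hpa
    have h2 := cc_const_star b.2 (w b) (w v) hpb
    rw [mul_inv_cancel_left] at h1 h2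
    rw [← h1, h2]

/-- Descent on the total length of words for the conjugators: if the wall of `v` separates `1` from
the wall of `u`, conjugating the component of `u` by a power of `v` folds the walls with type in
that component onto the sector of `1`, which shortens their words. -/
lemma mem_closure_of_conj [Fintype V] (ho : IsLabeling o) (n : ℕ) (θ : MulAut (W Γ o))
    (l : V → List (V × ℤ)) (hn : ∑ v, (l v).length ≤ n)
    (hθ : ∀ v, θ (gen Γ o v) = evalWord Γ o (l v) * gen Γ o v * (evalWord Γ o (l v))⁻¹) :
    θ ∈ Subgroup.closure {θ : MulAut (W Γ o) | IsPartialConj Γ o θ} := by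
  classical
  induction n using Nat.strong_induction_on generalizing θ l with
  | _ n ih =>
  by_cases hsep : ∀ u v, u ∉ vstar Γ v →
      cc Γ o v (evalWord Γ o (l u)) (evalWord Γ o (l v)) = 0
  · rw [eq_one_of_no_sep ho θ _ hθ hsep]
    exact one_mem _
  push Not at hsep
  obtain ⟨u, v, huv, hne⟩ := hsep
  let c := (SimpleGraph.induce (vstar Γ v)ᶜ Γ).connectedComponentMk ⟨u, huv⟩
  let K : Set V := Subtype.val '' c.supp
  have hK : IsCompOf Γ (vstar Γ v)ᶜ K := ⟨c, rfl⟩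
  have huK : u ∈ K := ⟨⟨u, huv⟩, rfl, rfl⟩
  have hcc : ∀ x ∈ K, cc Γ o v (evalWord Γ o (l x)) (evalWord Γ o (l v))
      = cc Γ o v (evalWord Γ o (l u)) (evalWord Γ o (l v)) := by
    rintro _ ⟨x, hx, rfl⟩
    exact cc_component ho θ.toMonoidHom (fun v => evalWord Γ o (l v)) hθ
      (SimpleGraph.ConnectedComponent.exact hx)
  obtain ⟨σ, hσ, hσn⟩ := exists_partialConj (o := o) hK
  obtain ⟨s, hs⟩ := ZMod.intCast_surjective
    (cc Γ o v (evalWord Γ o (l u)) (evalWord Γ o (l v)))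
  have hfold : ∀ x, ∃ l' : List (V × ℤ), l'.length ≤ (l x).length ∧
      (x ∈ K → l'.length < (l x).length) ∧
      (θ * σ ^ (-s)) (gen Γ o x) = evalWord Γ o l' * gen Γ o x * (evalWord Γ o l')⁻¹ := by
    intro x
    by_cases hx : x ∈ K
    · obtain ⟨s', l', h1, h2, h3, h4⟩ := fold_word v (l x) (evalWord Γ o (l v))
      refine ⟨l', h3, fun _ => h4 (by rw [hcc x hx]; exact hne), ?_⟩
      have hss : gen Γ o v ^ (-s') = gen Γ o v ^ (-s) := by
        apply gen_zpow_congr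
        push_cast
        rw [h1, hcc x hx, hs]
      rw [MulAut.mul_apply, (hσn (-s)).1 x hx, map_mul, map_mul, map_inv, map_zpow, hθ v, hθ x,
        conj_zpow, h2, hss]
      group
    · refine ⟨l x, le_rfl, fun h => absurd h hx, ?_⟩
      rw [MulAut.mul_apply, (hσn (-s)).2 x hx, hθ]
  choose l' h1 h2 h3 using hfold
  have hlt : ∑ x, (l' x).length < ∑ x, (l x).length :=
    Finset.sum_lt_sum (fun x _ => h1 x) ⟨u, Finset.mem_univ u, h2 u huK⟩
  have hmem := ih (∑ x, (l' x).length) (by omega) (θ * σ ^ (-s)) l' le_rfl h3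
  have e : θ = θ * σ ^ (-s) * σ ^ s := by group
  have hσ' : σ ∈ Subgroup.closure {θ : MulAut (W Γ o) | IsPartialConj Γ o θ} :=
    Subgroup.subset_closure hσ
  rw [e]
  exact mul_mem hmem (zpow_mem hσ' s)

variable (Γ o) in
/-- The subgroup of conjugating automorphisms. -/
def conjugatingSubgroup : Subgroup (MulAut (W Γ o)) where
  carrier := {θ | IsConjugating Γ o θ}
  one_mem' := by
    intro x
    exact ⟨1, by simp⟩
  mul_mem' := by
    intro θ η hθ hη x
    obtain ⟨w, hw⟩ := hη x
    obtain ⟨w', hw'⟩ := hθ x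
    exact ⟨θ w * w', by rw [MulAut.mul_apply, hw, map_mul, map_mul, map_inv, hw']; group⟩
  inv_mem' := by
    intro θ hθ x
    obtain ⟨w, hw⟩ := hθ x
    refine ⟨(θ⁻¹ w)⁻¹, ?_⟩
    apply θ.injective
    simp only [map_mul, map_inv, MulAut.apply_inv_self, hw]
    group

end Walls

end GP

open GP in
/-- The subgroup `Aut⁰ G` of conjugating automorphisms is generated by the partial
conjugations. -/
theorem conjugating_generated_by_partial_conj (V : Type) [Fintype V] [DecidableEq V]
    (Γ : SimpleGraph V) (o : V → ℕ) (ho : IsLabeling o) :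
    (Subgroup.closure {θ : MulAut (W Γ o) | IsPartialConj Γ o θ} :
        Set (MulAut (W Γ o))) =
      {θ : MulAut (W Γ o) | IsConjugating Γ o θ} := by
  apply Set.Subset.antisymm
  · have : Subgroup.closure {θ : MulAut (W Γ o) | IsPartialConj Γ o θ}
        ≤ conjugatingSubgroup Γ o := by
      rw [Subgroup.closure_le]
      rintro θ ⟨v, K, -, h1, h2⟩ x
      by_cases hx : x ∈ K
      · exact ⟨gen Γ o v, h1 x hx⟩
      · exact ⟨1, by simpa using h2 x hx⟩
    exact this
  · intro θ hθ
    choose w hw using hθ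
    choose l hl using fun v => exists_word (w v)
    exact mem_closure_of_conj ho _ θ l le_rfl fun v => by rw [hl, hw]
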